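/- Let q ≥ 2 be an integer, let R' be a real number with 0 < R' < 1, and suppose K_q(R') := 1 − (q/(q−1))·(1−R') > 0. Set τ := ((q−1)/q)·(1 − √(K_q(R'))). Then for every real s > 0, setting μ₁(s) := (R' + √(R'² + 4R'/s))/2 and γ(s) := ((q−1)/q)·(1 − √(1 − (q/(q−1))·(1 − μ₁(s)))), one has γ(s) ≥ τ − 1/(2s·√(K_q(R'))). -/

import Mathlib

/-- Dependency of the achievable correction radius `γ(s)` on the multiplicity `s`:
`γ(s) ≥ τ - 1/(2s√(K_q(R')))`, where `K_q(R') = 1 - (q/(q-1))(1-R')` and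
`τ = ((q-1)/q)(1 - √(K_q(R')))`. -/
theorem radius_dependency_on_multiplicity (q : ℕ) (hq : 2 ≤ q)
    (R' : ℝ) (hR0 : 0 < R') (hR1 : R' < 1)
    (K : ℝ) (hK : K = 1 - (q : ℝ) / ((q : ℝ) - 1) * (1 - R')) (hKpos : 0 < K)
    (τ : ℝ) (hτ : τ = ((q : ℝ) - 1) / q * (1 - Real.sqrt K)) :
    ∀ s : ℝ, 0 < s →
      ((q : ℝ) - 1) / q *
          (1 - Real.sqrt (1 - (q : ℝ) / ((q : ℝ) - 1) *
            (1 - (R' + Real.sqrt (R' ^ 2 + 4 * R' / s)) / 2))) ≥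
        τ - 1 / (2 * s * Real.sqrt K) := by
  intro s hs
  have hq2 : (2 : ℝ) ≤ q := by exact_mod_cast hq
  have hq1 : (0 : ℝ) < (q : ℝ) - 1 := by linarith
  have hq0 : (0 : ℝ) < (q : ℝ) := by linarith
  have hk : 0 < Real.sqrt K := Real.sqrt_pos.mpr hKpos
  have hkk : Real.sqrt K ^ 2 = K := Real.sq_sqrt hKpos.le
  have h1 : Real.sqrt (R' ^ 2 + 4 * R' / s) ≤ R' + 2 / s := by
    apply Real.sqrt_le_iff.mpr
    refine ⟨by positivity, ?_⟩
    have : (R' + 2 / s) ^ 2 = R' ^ 2 + 4 * R' / s + (2 / s) ^ 2 := by ring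
    rw [this]
    nlinarith [sq_nonneg (2 / s)]
  have hc : 0 < (q : ℝ) / ((q : ℝ) - 1) := by positivity
  have hci : ((q : ℝ) - 1) / q = ((q : ℝ) / ((q : ℝ) - 1))⁻¹ := by rw [inv_div]
  rw [hτ, hci]
  generalize (q : ℝ) / ((q : ℝ) - 1) = c at *
  generalize Real.sqrt K = k at *
  have h2 : Real.sqrt (1 - c * (1 - (R' + Real.sqrt (R' ^ 2 + 4 * R' / s)) / 2))
      ≤ k + c * (1 / (2 * s * k)) := by
    apply Real.sqrt_le_iff.mpr
    refine ⟨by positivity, ?_⟩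
    have e : (k + c * (1 / (2 * s * k))) ^ 2
        = k ^ 2 + c * (1 / s) + (c * (1 / (2 * s * k))) ^ 2 := by
      field_simp
      ring
    have h3 : (R' + Real.sqrt (R' ^ 2 + 4 * R' / s)) / 2 ≤ R' + 1 / s := by
      have : 2 / s = 2 * (1 / s) := by ring
      linarith
    have h4 := mul_le_mul_of_nonneg_left h3 hc.le
    rw [e, hkk, hK]
    nlinarith [sq_nonneg (c * (1 / (2 * s * k)))]
  have h5 := mul_le_mul_of_nonneg_left h2 (inv_pos.mpr hc).le
  have h6 : c⁻¹ * (k + c * (1 / (2 * s * k))) = c⁻¹ * k + 1 / (2 * s * k) := by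
    field_simp
  rw [h6] at h5
  rw [ge_iff_le, mul_sub, mul_sub]
  linarith
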